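/- arXiv:0906.3836 — 5 statements merged into one kernel-verified Lean document; each statement's English description precedes it below -/
import Mathlib

section
/- Let S denote the sum over all 64 triples (ε,j,δ) with ε ∈ {-1,1}^3, j ∈ {1,2,3,4}, δ ∈ {-1,1} of e_1(D(ε,j,δ))^8 / π(D(ε,j,δ)). Then S = 0. (This is the localization-formula computation showing that the classical Futaki invariant, equivalently the invariant F_{Td^1}, of the Nill–Paffenholz toric Fano 7-fold vanishes on the generic torus-induced holomorphic vector field.) -/
/-!
Put `A = ∑ aᵢ`, `B = ∑ bⱼ`, `t = (∑ εᵢ aᵢ) / 2`, `β = bⱼ - B / 4` and `w = c - A / 2 + B / 2`. In these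
centred coordinates the last entry of the tuple is `δ y` with `y = w + t + 2β`, and `e₁ = p + δ y`
with `p = 2t - 4β`.

* Summing over `δ` replaces `e₁ ^ 8 / (δ y)` by `Q(p, y) = ((p + y) ^ 8 - (p - y) ^ 8) / y`, a polynomial
  of degree `7` (`sum_delta`).
* Summing over `ε` against the signs `ε₁ ε₂ ε₃` and dividing by `a₁ a₂ a₃` is a third divided
  difference, symmetric about `t = 0`: it keeps only the odd powers `t ^ 3, t ^ 5, t ^ 7`, and the result
  has degree at most `4` in `β` (`sum_eps`).
* Summing over `j` against `1 / ∏ (bₖ - bⱼ)` is again a third divided difference. It kills `1, β, β²`,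
  and it sends `β ^ 4` to a multiple of `∑ βⱼ = 0` (`sum_vertices`).

So only the coefficient of `β ^ 3`, which is a multiple of `w`, could contribute. It is the coefficient
of `t ^ 3 β ^ 3` in the part of `Q` linear in `w`, and that part is a combination of the products
`(t - 2β) ^ k (t + 2β) ^ l` with `k` and `l` odd. These change sign under `t ↔ 2β`, hence contain no
`t ^ 3 β ^ 3`.
-/

open Finset

noncomputable section

/-- Sign of a Boolean: `true ↦ 1`, `false ↦ -1`, encoding `{-1,1}`. -/
def sgn (b : Bool) : ℝ := if b then 1 else -1

/-- The eigenvalue 7-tuple `D(ε,j,δ)` (as a multiset) of the generic torus-induced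
holomorphic vector field at the fixed point indexed by `(ε,j,δ)` on the
Nill–Paffenholz toric Fano 7-fold.  Here `a : Fin 3 → ℝ`, `b : Fin 4 → ℝ` (with `b 3 = 0`). -/
def tup (a : Fin 3 → ℝ) (b : Fin 4 → ℝ) (c : ℝ) (ε : Fin 3 → Bool) (j : Fin 4) (δ : Bool) :
    Multiset ℝ :=
  ({sgn (ε 0) * a 0, sgn (ε 1) * a 1, sgn (ε 2) * a 2} : Multiset ℝ)
    + (Finset.univ.erase j).val.map (fun k => b k - b j)
    + {sgn δ * (c - (∑ i ∈ Finset.univ.filter (fun i => ε i = false), a i) + 2 * b j)}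

/-- The `k`-th elementary symmetric polynomial of the entries of a multiset. -/
def esym (k : ℕ) (D : Multiset ℝ) : ℝ := ((D.powersetCard k).map Multiset.prod).sum

/-- The polynomial `((p + y) ^ 8 - (p - y) ^ 8) / y`. -/
def diffQuot (p y : ℝ) : ℝ := 16 * p ^ 7 + 112 * p ^ 5 * y ^ 2 + 112 * p ^ 3 * y ^ 4 + 16 * p * y ^ 6

theorem sum_delta (p y r : ℝ) (hy : y ≠ 0) :
    (p + y) ^ 8 / (r * y) + (p - y) ^ 8 / (r * -y) = diffQuot p y / r := by
  have h : (p + y) ^ 8 - (p - y) ^ 8 = diffQuot p y * y := by unfold diffQuot; ring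
  rw [mul_neg, div_neg, ← sub_eq_add_neg, ← sub_div, h, mul_div_mul_right _ _ hy]

/-- The alternating sum over `ε`, divided by `a₁ a₂ a₃`, as a polynomial in `β`. The factors `6`,
`5 (x² + y² + z²)` and the one multiplying `6560` come from the alternating moments of
`t ^ 3, t ^ 5, t ^ 7`. The `β ^ 3` term is absent. -/
def epsPoly (x y z w β : ℝ) : ℝ :=
  6 * (1376 * w ^ 4 - 11776 * β * w ^ 3 + 104192 * β ^ 2 * w ^ 2 + 900608 * β ^ 4)
    + 5 * (x ^ 2 + y ^ 2 + z ^ 2) * (9440 * w ^ 2 - 55808 * β * w + 176768 * β ^ 2)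
    + 6560 * ((21 * (x ^ 4 + y ^ 4 + z ^ 4)
        + 70 * (x ^ 2 * y ^ 2 + y ^ 2 * z ^ 2 + z ^ 2 * x ^ 2)) / 8)

/-- `diffQuot` at the fixed points over a given vertex, as a function of `t` in centred coordinates. -/
def centred (w β t : ℝ) : ℝ := diffQuot (2 * t - 4 * β) (w + t + 2 * β)

/-- The expansion of `centred` in powers of `t`: only the coefficients of `t ^ 3, t ^ 5, t ^ 7` matter
for the alternating sum, and the coefficient of `t ^ 3` has no `β ^ 3 w` term. -/
theorem centred_expand (w β : ℝ) : ∃ q₀ q₁ q₂ q₄ q₆ : ℝ, ∀ t : ℝ, centred w β t =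
    q₀ + q₁ * t + q₂ * t ^ 2
      + (1376 * w ^ 4 - 11776 * β * w ^ 3 + 104192 * β ^ 2 * w ^ 2 + 900608 * β ^ 4) * t ^ 3
      + q₄ * t ^ 4 + (9440 * w ^ 2 - 55808 * β * w + 176768 * β ^ 2) * t ^ 5
      + q₆ * t ^ 6 + 6560 * t ^ 7 := by
  refine ⟨-64 * β * w ^ 6 - 768 * β ^ 2 * w ^ 5 - 11008 * β ^ 3 * w ^ 4 - 67584 * β ^ 4 * w ^ 3
      - 302080 * β ^ 5 * w ^ 2 - 700416 * β ^ 6 * w - 839680 * β ^ 7,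
    32 * w ^ 6 + 8832 * β ^ 2 * w ^ 4 + 47104 * β ^ 3 * w ^ 3 + 349696 * β ^ 4 * w ^ 2
      + 892928 * β ^ 5 * w + 1538048 * β ^ 6,
    192 * w ^ 5 - 4416 * β * w ^ 4 - 208384 * β ^ 3 * w ^ 2 - 416768 * β ^ 4 * w
      - 1414144 * β ^ 5,
    4224 * w ^ 3 - 43712 * β * w ^ 2 + 104192 * β ^ 2 * w - 450304 * β ^ 3,
    10944 * w - 48064 * β,
    fun t => ?_⟩
  unfold centred diffQuot
  ring

theorem sum_eps (x y z w β : ℝ) :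
    centred w β ((x + y + z) / 2) - centred w β ((x + y - z) / 2)
      - centred w β ((x - y + z) / 2) + centred w β ((x - y - z) / 2)
      - centred w β ((-x + y + z) / 2) + centred w β ((-x + y - z) / 2)
      + centred w β ((-x - y + z) / 2) - centred w β ((-x - y - z) / 2)
      = x * y * z * epsPoly x y z w β := by
  obtain ⟨q₀, q₁, q₂, q₄, q₆, h⟩ := centred_expand w β
  simp only [h, epsPoly]
  ring

/-- The divided difference over the four points `βⱼ` of a quartic without cubic term vanishes when
`∑ βⱼ = 0`. -/
theorem sum_vertices (q r s u b₀ b₁ b₂ b₃ : ℝ) (hb : b₀ + b₁ + b₂ + b₃ = 0)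
    (h₀₁ : b₁ - b₀ ≠ 0) (h₀₂ : b₂ - b₀ ≠ 0) (h₀₃ : b₃ - b₀ ≠ 0)
    (h₁₂ : b₂ - b₁ ≠ 0) (h₁₃ : b₃ - b₁ ≠ 0) (h₂₃ : b₃ - b₂ ≠ 0) :
    (q + r * b₀ + s * b₀ ^ 2 + u * b₀ ^ 4) / ((b₁ - b₀) * (b₂ - b₀) * (b₃ - b₀))
      + (q + r * b₁ + s * b₁ ^ 2 + u * b₁ ^ 4) / ((b₀ - b₁) * (b₂ - b₁) * (b₃ - b₁))
      + (q + r * b₂ + s * b₂ ^ 2 + u * b₂ ^ 4) / ((b₀ - b₂) * (b₁ - b₂) * (b₃ - b₂))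
      + (q + r * b₃ + s * b₃ ^ 2 + u * b₃ ^ 4) / ((b₀ - b₃) * (b₁ - b₃) * (b₂ - b₃)) = 0 := by
  rw [← neg_sub b₁ b₀, ← neg_sub b₂ b₀, ← neg_sub b₃ b₀, ← neg_sub b₂ b₁, ← neg_sub b₃ b₁,
    ← neg_sub b₃ b₂]
  field_simp
  obtain rfl : b₃ = -b₀ - b₁ - b₂ := by linarith
  ring

theorem esym_one (D : Multiset ℝ) : esym 1 D = D.sum := by
  simp [esym, Multiset.powersetCard_one]

theorem sum_filter_false (a : Fin 3 → ℝ) (ε : Fin 3 → Bool) :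
    ∑ i ∈ univ.filter (fun i => ε i = false), a i
      = (∑ i, a i) / 2 - (sgn (ε 0) * a 0 + sgn (ε 1) * a 1 + sgn (ε 2) * a 2) / 2 := by
  rw [Finset.sum_filter, Fin.sum_univ_three, Fin.sum_univ_three]
  cases ε 0 <;> cases ε 1 <;> cases ε 2 <;> simp [sgn] <;> ring

/-- The contribution of the two fixed points over `(ε, j)`, in centred coordinates. -/
theorem sum_pair (a : Fin 3 → ℝ) (b : Fin 4 → ℝ) (c : ℝ) (ε : Fin 3 → Bool) (j : Fin 4)
    (h : ∀ x ∈ tup a b c ε j true, x ≠ 0) :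
    ∑ δ : Bool, (esym 1 (tup a b c ε j δ)) ^ 8 / (tup a b c ε j δ).prod
      = sgn (ε 0) * sgn (ε 1) * sgn (ε 2)
        * centred (c - (∑ i, a i) / 2 + (∑ k, b k) / 2) (b j - (∑ k, b k) / 4)
          ((sgn (ε 0) * a 0 + sgn (ε 1) * a 1 + sgn (ε 2) * a 2) / 2)
        / (a 0 * a 1 * a 2 * ∏ k ∈ univ.erase j, (b k - b j)) := by
  set t := (sgn (ε 0) * a 0 + sgn (ε 1) * a 1 + sgn (ε 2) * a 2) / 2 with ht
  set w := c - (∑ i, a i) / 2 + (∑ k, b k) / 2 with hw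
  set β := b j - (∑ k, b k) / 4 with hβ
  have hlast : c - (∑ i ∈ univ.filter (fun i => ε i = false), a i) + 2 * b j = w + t + 2 * β := by
    rw [sum_filter_false, ht, hw, hβ]; ring
  have hy : w + t + 2 * β ≠ 0 := by
    apply h
    rw [← hlast]
    simp [tup, sgn]
  have hsum : ∑ k ∈ univ.erase j, (b k - b j) = -4 * β := by
    rw [Finset.sum_erase _ (sub_self _), Finset.sum_sub_distrib, hβ]
    simp
    ring
  have he : ∀ δ, esym 1 (tup a b c ε j δ) = 2 * t - 4 * β + sgn δ * (w + t + 2 * β) := by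
    intro δ
    rw [esym_one, tup, hlast, Multiset.sum_add, Multiset.sum_add]
    change _ + ∑ k ∈ univ.erase j, (b k - b j) + _ = _
    rw [hsum]
    simp [ht]
    ring
  have hp : ∀ δ, (tup a b c ε j δ).prod = sgn (ε 0) * sgn (ε 1) * sgn (ε 2)
      * (a 0 * a 1 * a 2 * ∏ k ∈ univ.erase j, (b k - b j)) * (sgn δ * (w + t + 2 * β)) := by
    intro δ
    rw [tup, hlast, Multiset.prod_add, Multiset.prod_add]
    change _ * (∏ k ∈ univ.erase j, (b k - b j)) * _ = _
    generalize ∏ k ∈ univ.erase j, (b k - b j) = r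
    simp only [Multiset.insert_eq_cons, Multiset.prod_cons, Multiset.prod_singleton]
    ring
  have hs : ∀ x : Bool, (sgn x)⁻¹ = sgn x := by intro x; cases x <;> norm_num [sgn]
  rw [Fintype.sum_bool]
  simp only [he, hp]
  have := sum_delta (2 * t - 4 * β) (w + t + 2 * β) (sgn (ε 0) * sgn (ε 1) * sgn (ε 2)
      * (a 0 * a 1 * a 2 * ∏ k ∈ univ.erase j, (b k - b j))) hy
  have e₁ : sgn true = 1 := rfl
  have e₂ : sgn false = -1 := rfl
  rw [e₁, e₂, one_mul, neg_one_mul, ← sub_eq_add_neg, this, centred]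
  simp only [div_eq_mul_inv, mul_inv, hs]
  ring

theorem futaki_Td1_vanishes (a : Fin 3 → ℝ) (b : Fin 4 → ℝ) (c : ℝ)
    (hb4 : b 3 = 0)
    (hgen : ∀ (ε : Fin 3 → Bool) (j : Fin 4) (δ : Bool),
      ∀ x ∈ tup a b c ε j δ, x ≠ 0) :
    ∑ ε : Fin 3 → Bool, ∑ j : Fin 4, ∑ δ : Bool,
      (esym 1 (tup a b c ε j δ)) ^ 8 / (tup a b c ε j δ).prod = 0 := by
  have ha : ∀ i, a i ≠ 0 := by
    have h := hgen (fun _ => true) 0 true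
    intro i
    apply h
    fin_cases i <;> simp [tup, sgn]
  have hb : ∀ j k, k ≠ j → b k - b j ≠ 0 := by
    intro j k hk
    apply hgen (fun _ => true) j true
    simp only [tup, Multiset.mem_add, Multiset.mem_map]
    exact Or.inl (Or.inr ⟨k, Finset.mem_erase.mpr ⟨hk, mem_univ k⟩, rfl⟩)
  simp only [fun ε j => sum_pair a b c ε j (hgen ε j true)]
  rw [Finset.sum_comm]
  set w := c - (∑ i, a i) / 2 + (∑ k, b k) / 2
  set m := (∑ k, b k) / 4 with hm
  have huniv : (univ : Finset (Fin 3 → Bool)) = {![true, true, true], ![true, true, false],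
      ![true, false, true], ![true, false, false], ![false, true, true], ![false, true, false],
      ![false, false, true], ![false, false, false]} := by decide
  have hj : ∀ j, ∑ ε : Fin 3 → Bool, sgn (ε 0) * sgn (ε 1) * sgn (ε 2)
        * centred w (b j - m) ((sgn (ε 0) * a 0 + sgn (ε 1) * a 1 + sgn (ε 2) * a 2) / 2)
        / (a 0 * a 1 * a 2 * ∏ k ∈ univ.erase j, (b k - b j))
      = epsPoly (a 0) (a 1) (a 2) w (b j - m) / ∏ k ∈ univ.erase j, (b k - b j) := by
    intro j
    have haaa : a 0 * a 1 * a 2 ≠ 0 := mul_ne_zero (mul_ne_zero (ha 0) (ha 1)) (ha 2)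
    rw [← Finset.sum_div, ← mul_div_mul_left _ (∏ k ∈ univ.erase j, (b k - b j)) haaa,
      ← sum_eps, huniv]
    congr 1
    repeat rw [Finset.sum_insert (by decide)]
    rw [Finset.sum_singleton]
    simp [sgn]
    ring_nf
  simp only [hj]
  have hβ : (b 0 - m) + (b 1 - m) + (b 2 - m) + (b 3 - m) = 0 := by
    rw [hm, Fin.sum_univ_four]; ring
  have key := sum_vertices (epsPoly (a 0) (a 1) (a 2) w 0)
    (-6 * 11776 * w ^ 3 - 5 * (a 0 ^ 2 + a 1 ^ 2 + a 2 ^ 2) * 55808 * w)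
    (6 * 104192 * w ^ 2 + 5 * (a 0 ^ 2 + a 1 ^ 2 + a 2 ^ 2) * 176768) (6 * 900608) _ _ _ _ hβ
  simp only [sub_sub_sub_cancel_right] at key
  specialize key (hb _ _ (by decide)) (hb _ _ (by decide)) (hb _ _ (by decide))
    (hb _ _ (by decide)) (hb _ _ (by decide)) (hb _ _ (by decide))
  have hpoly : ∀ β, epsPoly (a 0) (a 1) (a 2) w β = epsPoly (a 0) (a 1) (a 2) w 0
      + (-6 * 11776 * w ^ 3 - 5 * (a 0 ^ 2 + a 1 ^ 2 + a 2 ^ 2) * 55808 * w) * β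
      + (6 * 104192 * w ^ 2 + 5 * (a 0 ^ 2 + a 1 ^ 2 + a 2 ^ 2) * 176768) * β ^ 2
      + 6 * 900608 * β ^ 4 := by
    intro β; unfold epsPoly; ring
  simp only [← hpoly] at key
  have u₀ : (univ : Finset (Fin 4)).erase 0 = {1, 2, 3} := by decide
  have u₁ : (univ : Finset (Fin 4)).erase 1 = {0, 2, 3} := by decide
  have u₂ : (univ : Finset (Fin 4)).erase 2 = {0, 1, 3} := by decide
  have u₃ : (univ : Finset (Fin 4)).erase 3 = {0, 1, 2} := by decide
  have hprod : ∀ (i j k : Fin 4) (f : Fin 4 → ℝ), i ≠ j → i ≠ k → j ≠ k →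
      ∏ l ∈ ({i, j, k} : Finset (Fin 4)), f l = f i * f j * f k := by
    intro i j k f hij hik hjk
    rw [Finset.prod_insert (by simp [hij, hik]), Finset.prod_pair hjk, mul_assoc]
  rw [Fin.sum_univ_four, u₀, u₁, u₂, u₃, hprod _ _ _ _ (by decide) (by decide) (by decide),
    hprod _ _ _ _ (by decide) (by decide) (by decide),
    hprod _ _ _ _ (by decide) (by decide) (by decide),
    hprod _ _ _ _ (by decide) (by decide) (by decide)]
  exact key
end
end

section
/- Let S denote the sum over all 64 triples (ε,j,δ) with ε ∈ {-1,1}^3, j ∈ {1,2,3,4}, δ ∈ {-1,1} of (−e_1^4 + 4·e_1^2·e_2 + 3·e_2^2 + e_1·e_3 − e_4)·e_1^4 / π, where all e_k and π are evaluated at D(ε,j,δ). Then S = 94080·(a_1+a_2+a_3 − b_1−b_2−b_3 − 2c). (This identity computes 720·F_{Td^4} of the Nill–Paffenholz toric Fano 7-fold by the localization formula.) -/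
/-!
The left-hand side is a localization sum over the fixed points of an iterated projective bundle,
and it is evaluated one factor of the tower at a time.

Adjoining one entry `x` to a tuple `D` changes the elementary symmetric polynomials by
`e_k(x, D) = e_k(D) + x * e_{k-1}(D)`. Summing over the sign of an entry `±x` a polynomial divided
by that entry therefore gives twice the odd part in `x` divided by `x`, which is again a polynomial,
now in `x ^ 2` and the `e_k(D)`. This is done for the last entry (`sum_delta`) and then for the
three entries `± a i` (`sum_eps_one`, `sum_eps_two`, `sum_eps_three`). For the latter, put
`m = c - (a 0 + a 1 + a 2) / 2 + 2 * b j`; then the last entry is, up to the sign `δ`, equal to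
`m + (ε 0 * a 0 + ε 1 * a 1 + ε 2 * a 2) / 2`, so that it depends on each sign only through
`ε i * a i`. The polynomials obtained in this way are `pushDelta`, `pushOne`, `pushTwo` and
`pushThree`, of degrees 7, 6, 5 and 4.

What remains is `∑ j, pushThree / ∏_{k ≠ j} (b k - b j)`. Since `b j - b j = 0`, the elementary
symmetric polynomials of the three differences are those of all four numbers `b k - b j`, hence
polynomials in `z = b j` with coefficients symmetric in `b`. So `pushThree` is a quartic in `z`
whose coefficients do not depend on `j` (`pushThree_quartic`), and the Lagrange sums
`∑ j, (b j) ^ n / ∏_{k ≠ j} (b k - b j)`, which are `0, 0, 0, -1, -∑ k, b k` for `n = 0, …, 4`,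
leave only its two top coefficients.
-/

open Finset

noncomputable section

lemma esym_zero (D : Multiset ℝ) : esym 0 D = 1 := by simp [esym]

lemma esym_succ_empty (k : ℕ) : esym (k + 1) 0 = 0 := by
  simp [esym, Multiset.powersetCard_zero_right]

lemma esym_succ_cons (k : ℕ) (x : ℝ) (D : Multiset ℝ) :
    esym (k + 1) (x ::ₘ D) = esym (k + 1) D + x * esym k D := by
  simp [esym, Multiset.powersetCard_cons, Multiset.sum_map_mul_left]

/-- The contribution of one fixed point with eigenvalue tuple `D`. -/
def contrib (D : Multiset ℝ) : ℝ :=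
  ((-esym 1 D ^ 4 + 4 * esym 1 D ^ 2 * esym 2 D + 3 * esym 2 D ^ 2 + esym 1 D * esym 3 D
    - esym 4 D) * esym 1 D ^ 4) / D.prod

/-- Result of summing `contrib` over the sign of an entry `± h`, with `H = h ^ 2`, up to division
by the product of the remaining entries; the variables `u1, …, u4` are the elementary symmetric
polynomials of the remaining entries. -/
def pushDelta (u1 u2 u3 u4 H : ℝ) : ℝ :=
  24 * H * u1 * u2 ^ 2 - 8 * H * u1 * u4 + 8 * H * u1 ^ 2 * u3 + 252 * H * u1 ^ 3 * u2 +
    32 * H * u1 ^ 5 + 70 * H ^ 2 * u1 * u2 + 32 * H ^ 2 * u1 ^ 3 - 8 * H ^ 3 * u1 +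
    24 * u1 ^ 3 * u2 ^ 2 - 8 * u1 ^ 3 * u4 + 8 * u1 ^ 4 * u3 + 62 * u1 ^ 5 * u2 - 8 * u1 ^ 7

/-- Result of summing `pushDelta / (± x)` over the sign of a first entry `± x`, with `X = x ^ 2`,
when that entry also shifts the last one to `h ± x / 2`. -/
def pushOne (u1 u2 u3 u4 h X : ℝ) : ℝ :=
  1710 * X * h * u1 * u2 + 2232 * X * h * u1 ^ 3 + 2698 * X * h ^ 2 * u1 ^ 2 +
    730 * X * h ^ 2 * u2 + 624 * X * h ^ 3 * u1 + 4 * X * h ^ 4 + 20 * X * u1 * u3 +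
    2030 * X * u1 ^ 2 * u2 + 1030 * X * u1 ^ 4 + 60 * X * u2 ^ 2 - 20 * X * u4 +
    987 * X ^ 2 * h * u1 + 145 * X ^ 2 * h ^ 2 + 3611 / 4 * X ^ 2 * u1 ^ 2 +
    1115 / 4 * X ^ 2 * u2 + 15 / 4 * X ^ 3 + 48 * h * u1 * u2 ^ 2 - 16 * h * u1 * u4 +
    16 * h * u1 ^ 2 * u3 + 504 * h * u1 ^ 3 * u2 + 64 * h * u1 ^ 5 + 16 * h ^ 2 * u1 * u3 +
    1624 * h ^ 2 * u1 ^ 2 * u2 + 824 * h ^ 2 * u1 ^ 4 + 48 * h ^ 2 * u2 ^ 2 - 16 * h ^ 2 * u4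
    + 280 * h ^ 3 * u1 * u2 + 128 * h ^ 3 * u1 ^ 3 + 332 * h ^ 4 * u1 ^ 2 + 140 * h ^ 4 * u2 -
    48 * h ^ 5 * u1 - 16 * h ^ 6 + 144 * u1 ^ 2 * u2 ^ 2 - 48 * u1 ^ 2 * u4 + 48 * u1 ^ 3 * u3
    + 732 * u1 ^ 4 * u2 + 12 * u1 ^ 6

/-- Result of summing `pushOne / (± y)` over the sign of a second entry `± y`, with
`Y = y ^ 2`, when that entry also shifts `h` to `h ± y / 2`. -/
def pushTwo (u1 u2 u3 u4 h X Y : ℝ) : ℝ :=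
  10800 * X * Y * h + 23925 * X * Y * u1 + 22208 * X * h * u1 ^ 2 + 4880 * X * h * u2 +
    14124 * X * h ^ 2 * u1 + 1264 * X * h ^ 3 + 10110 * X * u1 * u2 + 14532 * X * u1 ^ 3 +
    2264 * X ^ 2 * h + 10311 / 2 * X ^ 2 * u1 + 22208 * Y * h * u1 ^ 2 + 4880 * Y * h * u2 +
    14124 * Y * h ^ 2 * u1 + 1264 * Y * h ^ 3 + 10110 * Y * u1 * u2 + 14532 * Y * u1 ^ 3 +
    2264 * Y ^ 2 * h + 10311 / 2 * Y ^ 2 * u1 + 64 * h * u1 * u3 + 6496 * h * u1 ^ 2 * u2 +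
    3296 * h * u1 ^ 4 + 192 * h * u2 ^ 2 - 64 * h * u4 + 7560 * h ^ 2 * u1 * u2 +
    10224 * h ^ 2 * u1 ^ 3 + 2656 * h ^ 3 * u1 ^ 2 + 1120 * h ^ 3 * u2 + 1368 * h ^ 4 * u1 -
    192 * h ^ 5 + 624 * u1 * u2 ^ 2 - 208 * u1 * u4 + 208 * u1 ^ 2 * u3 + 7032 * u1 ^ 3 * u2 +
    1672 * u1 ^ 5

/-- Result of summing `pushTwo / (± z)` over the sign of a third entry `± z`, with
`Z = z ^ 2`, when that entry also shifts `h` to `h ± z / 2`. -/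
def pushThree (u1 u2 u3 u4 h X Y Z : ℝ) : ℝ :=
  58650 * X * Y + 58650 * X * Z + 126840 * X * h * u1 + 32040 * X * h ^ 2 +
    129620 * X * u1 ^ 2 + 25100 * X * u2 + 12575 * X ^ 2 + 58650 * Y * Z + 126840 * Y * h * u1
    + 32040 * Y * h ^ 2 + 129620 * Y * u1 ^ 2 + 25100 * Y * u2 + 12575 * Y ^ 2 +
    126840 * Z * h * u1 + 32040 * Z * h ^ 2 + 129620 * Z * u1 ^ 2 + 25100 * Z * u2 +
    12575 * Z ^ 2 + 42000 * h * u1 * u2 + 59808 * h * u1 ^ 3 + 84432 * h ^ 2 * u1 ^ 2 +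
    18480 * h ^ 2 * u2 + 18336 * h ^ 3 * u1 + 1776 * h ^ 4 + 480 * u1 * u3 +
    51600 * u1 ^ 2 * u2 + 34080 * u1 ^ 4 + 1440 * u2 ^ 2 - 480 * u4

lemma esym_one_cons (x : ℝ) (D : Multiset ℝ) : esym 1 (x ::ₘ D) = esym 1 D + x := by
  simpa [esym_zero] using esym_succ_cons 0 x D

lemma esym_two_cons (x : ℝ) (D : Multiset ℝ) :
    esym 2 (x ::ₘ D) = esym 2 D + x * esym 1 D := esym_succ_cons 1 x D

lemma esym_three_cons (x : ℝ) (D : Multiset ℝ) :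
    esym 3 (x ::ₘ D) = esym 3 D + x * esym 2 D := esym_succ_cons 2 x D

lemma esym_four_cons (x : ℝ) (D : Multiset ℝ) :
    esym 4 (x ::ₘ D) = esym 4 D + x * esym 3 D := esym_succ_cons 3 x D

/-- A sum over the two signs of a numerator `f` divided by the signed entry `± x` and by the
product `p` of the other entries: it suffices to know twice the odd part of `f`. -/
lemma sum_sign_div (f : ℝ → ℝ) (x p g : ℝ) (hx : x ≠ 0) (hf : f x - f (-x) = x * g) :
    ∑ e : Bool, f (sgn e * x) / (sgn e * x * p) = g / p := by
  have key : f x / x + f (-x) / (-x) = g := by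
    rw [div_neg, ← sub_eq_add_neg, ← sub_div, hf, mul_div_cancel_left₀ _ hx]
  simp only [Fintype.sum_bool, sgn, if_true, Bool.false_eq_true, if_false, one_mul, neg_one_mul]
  simp only [div_mul_eq_div_div, ← key, add_div]

lemma sum_delta_s2 (D : Multiset ℝ) (h : ℝ) (hh : h ≠ 0) :
    ∑ e : Bool, contrib (sgn e * h ::ₘ D)
      = pushDelta (esym 1 D) (esym 2 D) (esym 3 D) (esym 4 D) (h ^ 2) / D.prod := by
  simp only [contrib, esym_one_cons, esym_two_cons, esym_three_cons, esym_four_cons,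
    Multiset.prod_cons]
  refine sum_sign_div (fun t => (-(esym 1 D + t) ^ 4
    + 4 * (esym 1 D + t) ^ 2 * (esym 2 D + t * esym 1 D) + 3 * (esym 2 D + t * esym 1 D) ^ 2
    + (esym 1 D + t) * (esym 3 D + t * esym 2 D) - (esym 4 D + t * esym 3 D))
    * (esym 1 D + t) ^ 4) h D.prod _ hh ?_
  simp only [pushDelta]
  ring

lemma sum_eps_one (D : Multiset ℝ) (h x : ℝ) (hx : x ≠ 0) :
    ∑ e : Bool, pushDelta (esym 1 (sgn e * x ::ₘ D)) (esym 2 (sgn e * x ::ₘ D))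
        (esym 3 (sgn e * x ::ₘ D)) (esym 4 (sgn e * x ::ₘ D)) ((h + sgn e * x / 2) ^ 2)
        / (sgn e * x ::ₘ D).prod
      = pushOne (esym 1 D) (esym 2 D) (esym 3 D) (esym 4 D) h (x ^ 2) / D.prod := by
  simp only [esym_one_cons, esym_two_cons, esym_three_cons, esym_four_cons, Multiset.prod_cons]
  refine sum_sign_div (fun t => pushDelta (esym 1 D + t) (esym 2 D + t * esym 1 D)
    (esym 3 D + t * esym 2 D) (esym 4 D + t * esym 3 D) ((h + t / 2) ^ 2)) x D.prod _ hx ?_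
  simp only [pushDelta, pushOne]
  ring

lemma sum_eps_two (D : Multiset ℝ) (h x X : ℝ) (hx : x ≠ 0) :
    ∑ e : Bool, pushOne (esym 1 (sgn e * x ::ₘ D)) (esym 2 (sgn e * x ::ₘ D))
        (esym 3 (sgn e * x ::ₘ D)) (esym 4 (sgn e * x ::ₘ D)) (h + sgn e * x / 2) X
        / (sgn e * x ::ₘ D).prod
      = pushTwo (esym 1 D) (esym 2 D) (esym 3 D) (esym 4 D) h X (x ^ 2) / D.prod := by
  simp only [esym_one_cons, esym_two_cons, esym_three_cons, esym_four_cons, Multiset.prod_cons]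
  refine sum_sign_div (fun t => pushOne (esym 1 D + t) (esym 2 D + t * esym 1 D)
    (esym 3 D + t * esym 2 D) (esym 4 D + t * esym 3 D) (h + t / 2) X) x D.prod _ hx ?_
  simp only [pushOne, pushTwo]
  ring

lemma sum_eps_three (D : Multiset ℝ) (h x X Y : ℝ) (hx : x ≠ 0) :
    ∑ e : Bool, pushTwo (esym 1 (sgn e * x ::ₘ D)) (esym 2 (sgn e * x ::ₘ D))
        (esym 3 (sgn e * x ::ₘ D)) (esym 4 (sgn e * x ::ₘ D)) (h + sgn e * x / 2) X Y
        / (sgn e * x ::ₘ D).prod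
      = pushThree (esym 1 D) (esym 2 D) (esym 3 D) (esym 4 D) h X Y (x ^ 2) / D.prod := by
  simp only [esym_one_cons, esym_two_cons, esym_three_cons, esym_four_cons, Multiset.prod_cons]
  refine sum_sign_div (fun t => pushTwo (esym 1 D + t) (esym 2 D + t * esym 1 D)
    (esym 3 D + t * esym 2 D) (esym 4 D + t * esym 3 D) (h + t / 2) X Y) x D.prod _ hx ?_
  simp only [pushTwo, pushThree]
  ring

/-- All sixteen sign choices over one fixed `j`, with `D` the tuple of the differences
`b k - b j` and `m` as in the module comment. -/
lemma sum_signs (D : Multiset ℝ) (x y z m : ℝ) (hx : x ≠ 0) (hy : y ≠ 0) (hz : z ≠ 0)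
    (hm : ∀ e₀ e₁ e₂ : Bool, m + sgn e₂ * z / 2 + sgn e₁ * y / 2 + sgn e₀ * x / 2 ≠ 0) :
    ∑ e₂ : Bool, ∑ e₁ : Bool, ∑ e₀ : Bool, ∑ d : Bool,
      contrib (sgn d * (m + sgn e₂ * z / 2 + sgn e₁ * y / 2 + sgn e₀ * x / 2)
        ::ₘ sgn e₀ * x ::ₘ sgn e₁ * y ::ₘ sgn e₂ * z ::ₘ D)
      = pushThree (esym 1 D) (esym 2 D) (esym 3 D) (esym 4 D) m (x ^ 2) (y ^ 2) (z ^ 2)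
        / D.prod := by
  rw [← sum_eps_three D m z (x ^ 2) (y ^ 2) hz]
  refine sum_congr rfl fun e₂ _ => ?_
  rw [← sum_eps_two _ _ y (x ^ 2) hy]
  refine sum_congr rfl fun e₁ _ => ?_
  rw [← sum_eps_one _ _ x hx]
  exact sum_congr rfl fun e₀ _ => sum_delta_s2 _ _ (hm e₀ e₁ e₂)

lemma sum_bool_cube (F : (Fin 3 → Bool) → ℝ) :
    ∑ ε, F ε = ∑ e₂ : Bool, ∑ e₁ : Bool, ∑ e₀ : Bool, F ![e₀, e₁, e₂] := by
  have huniv : (univ : Finset (Fin 3 → Bool)) =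
      {![true, true, true], ![false, true, true], ![true, false, true], ![false, false, true],
       ![true, true, false], ![false, true, false], ![true, false, false],
       ![false, false, false]} := by decide
  rw [huniv]
  repeat rw [sum_insert (by decide)]
  simp only [sum_singleton, Fintype.sum_bool]
  ring

/-- The last entry of the tuple in terms of the half-sum of the signed `a i`. -/
lemma last_entry_eq (a : Fin 3 → ℝ) (c β : ℝ) (e₀ e₁ e₂ : Bool) :
    c - (∑ i ∈ univ.filter (fun i => ![e₀, e₁, e₂] i = false), a i) + 2 * β
      = (c - (a 0 + a 1 + a 2) / 2 + 2 * β)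
        + sgn e₂ * a 2 / 2 + sgn e₁ * a 1 / 2 + sgn e₀ * a 0 / 2 := by
  rw [sum_filter, Fin.sum_univ_three]
  cases e₀ <;> cases e₁ <;> cases e₂ <;> simp [sgn] <;> ring

lemma tup_eq (a : Fin 3 → ℝ) (b : Fin 4 → ℝ) (c : ℝ) (e₀ e₁ e₂ : Bool) (j : Fin 4) (d : Bool) :
    tup a b c ![e₀, e₁, e₂] j d =
      sgn d * ((c - (a 0 + a 1 + a 2) / 2 + 2 * b j)
        + sgn e₂ * a 2 / 2 + sgn e₁ * a 1 / 2 + sgn e₀ * a 0 / 2)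
      ::ₘ sgn e₀ * a 0 ::ₘ sgn e₁ * a 1 ::ₘ sgn e₂ * a 2
      ::ₘ (univ.erase j).val.map (fun k => b k - b j) := by
  rw [tup, last_entry_eq, add_comm, Multiset.singleton_add]
  rfl

lemma sum_signs_tup (a : Fin 3 → ℝ) (b : Fin 4 → ℝ) (c : ℝ) (j : Fin 4)
    (hgen : ∀ (ε : Fin 3 → Bool) (j : Fin 4) (δ : Bool), ∀ x ∈ tup a b c ε j δ, x ≠ 0)
    (p q r : ℝ) (hD : (univ.erase j).val.map (fun k => b k - b j) = p ::ₘ q ::ₘ r ::ₘ 0) :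
    ∑ e₂ : Bool, ∑ e₁ : Bool, ∑ e₀ : Bool, ∑ d : Bool, contrib (tup a b c ![e₀, e₁, e₂] j d)
      = pushThree (p + q + r) (p * q + p * r + q * r) (p * q * r) 0
          (c - (a 0 + a 1 + a 2) / 2 + 2 * b j) (a 0 ^ 2) (a 1 ^ 2) (a 2 ^ 2)
        * (p * q * r)⁻¹ := by
  have hmem := fun e₀ e₁ e₂ => hgen ![e₀, e₁, e₂] j true
  simp only [tup_eq, hD] at hmem ⊢
  have h0 := hmem true true true (a 0) (by simp [sgn])
  have h1 := hmem true true true (a 1) (by simp [sgn])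
  have h2 := hmem true true true (a 2) (by simp [sgn])
  rw [sum_signs _ _ _ _ _ h0 h1 h2
    (fun e₀ e₁ e₂ => hmem e₀ e₁ e₂ _ (by simp [sgn])), div_eq_mul_inv]
  have hz : ∀ k, esym (k + 1) 0 = 0 := esym_succ_empty
  have z1 := hz 0
  have z2 := hz 1
  have z3 := hz 2
  have z4 := hz 3
  norm_num at z1 z2 z3 z4
  simp only [esym_one_cons, esym_two_cons, esym_three_cons, esym_four_cons, z1, z2, z3, z4,
    Multiset.prod_cons, Multiset.prod_zero]
  ring_nf

/-- With `e1, e2, e3` the elementary symmetric polynomials of all the `b k` and `z = b j`, the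
first three arguments are those of the differences `b k - b j`. -/
lemma pushThree_quartic (e1 e2 e3 κ X Y Z : ℝ) :
    ∃ c0 c1 c2 : ℝ, ∀ z : ℝ,
      pushThree (e1 - 4 * z) (e2 - 3 * e1 * z + 6 * z ^ 2)
        (e3 - 2 * e2 * z + 3 * e1 * z ^ 2 - 4 * z ^ 3) 0 (κ + 2 * z) X Y Z
      = c0 + c1 * z + c2 * z ^ 2 + (188160 * κ - 9260928 * e1) * z ^ 3 + 9355008 * z ^ 4 := by
  refine ⟨58650 * X * Y + 58650 * X * Z + 126840 * X * e1 * κ + 129620 * X * e1 ^ 2 + 25100 * X * e2 +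
    32040 * X * κ ^ 2 + 12575 * X ^ 2 + 58650 * Y * Z + 126840 * Y * e1 * κ +
    129620 * Y * e1 ^ 2 + 25100 * Y * e2 + 32040 * Y * κ ^ 2 + 12575 * Y ^ 2 +
    126840 * Z * e1 * κ + 129620 * Z * e1 ^ 2 + 25100 * Z * e2 + 32040 * Z * κ ^ 2 +
    12575 * Z ^ 2 + 42000 * e1 * e2 * κ + 480 * e1 * e3 + 18336 * e1 * κ ^ 3 +
    51600 * e1 ^ 2 * e2 + 84432 * e1 ^ 2 * κ ^ 2 + 59808 * e1 ^ 3 * κ + 34080 * e1 ^ 4 +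
    18480 * e2 * κ ^ 2 + 1440 * e2 ^ 2 + 1776 * κ ^ 4,
    - 858580 * X * e1 - 379200 * X * κ - 858580 * Y * e1 - 379200 * Y * κ - 858580 * Z * e1 -
    379200 * Z * κ - 338400 * e1 * e2 - 620880 * e1 * κ ^ 2 - 505968 * e1 ^ 2 * κ -
    580464 * e1 ^ 3 - 94080 * e2 * κ - 1920 * e3 - 59136 * κ ^ 3,
    1337960 * X + 1337960 * Y + 1337960 * Z + 923232 * e1 * κ + 3484416 * e1 ^ 2 + 584640 * e2 +
    1064352 * κ ^ 2, fun z => ?_⟩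
  simp only [pushThree]
  ring

theorem futaki_Td4 (a : Fin 3 → ℝ) (b : Fin 4 → ℝ) (c : ℝ)
    (hb4 : b 3 = 0)
    (hgen : ∀ (ε : Fin 3 → Bool) (j : Fin 4) (δ : Bool),
      ∀ x ∈ tup a b c ε j δ, x ≠ 0) :
    ∑ ε : Fin 3 → Bool, ∑ j : Fin 4, ∑ δ : Bool,
      (let E : ℕ → ℝ := fun k => esym k (tup a b c ε j δ);
       ((-E 1 ^ 4 + 4 * E 1 ^ 2 * E 2 + 3 * E 2 ^ 2 + E 1 * E 3 - E 4) * E 1 ^ 4) / (tup a b c ε j δ).prod)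
    = 94080 * (a 0 + a 1 + a 2 - b 0 - b 1 - b 2 - 2 * c) := by
  have hdiff : ∀ j k : Fin 4, k ≠ j → b k - b j ≠ 0 := fun j k hk =>
    hgen (fun _ => true) j true _ (by
      simp only [tup, Multiset.mem_add]
      exact Or.inl (Or.inr (Multiset.mem_map_of_mem _ (mem_erase.2 ⟨hk, mem_univ k⟩))))
  change ∑ ε : Fin 3 → Bool, ∑ j : Fin 4, ∑ δ : Bool, contrib (tup a b c ε j δ) = _
  rw [sum_comm]
  simp only [sum_bool_cube]
  rw [Fin.sum_univ_four,
    sum_signs_tup a b c 0 hgen (b 1 - b 0) (b 2 - b 0) (b 3 - b 0) rfl,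
    sum_signs_tup a b c 1 hgen (b 0 - b 1) (b 2 - b 1) (b 3 - b 1) rfl,
    sum_signs_tup a b c 2 hgen (b 0 - b 2) (b 1 - b 2) (b 3 - b 2) rfl,
    sum_signs_tup a b c 3 hgen (b 0 - b 3) (b 1 - b 3) (b 2 - b 3) rfl]
  have h01 := hdiff 0 1 (by decide)
  have h02 := hdiff 0 2 (by decide)
  have h12 := hdiff 1 2 (by decide)
  have h0 := hdiff 3 0 (by decide)
  have h1 := hdiff 3 1 (by decide)
  have h2 := hdiff 3 2 (by decide)
  rw [hb4] at h0 h1 h2 ⊢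
  obtain ⟨c0, c1, c2, hq⟩ := pushThree_quartic (b 0 + b 1 + b 2)
    (b 0 * b 1 + b 0 * b 2 + b 1 * b 2) (b 0 * b 1 * b 2)
    (c - (a 0 + a 1 + a 2) / 2) (a 0 ^ 2) (a 1 ^ 2) (a 2 ^ 2)
  have q0 := hq (b 0)
  have q1 := hq (b 1)
  have q2 := hq (b 2)
  have q3 := hq 0
  generalize b 0 = x at *
  generalize b 1 = y at *
  generalize b 2 = z at *
  rw [sub_zero] at h0 h1 h2
  -- The reciprocals of the products of differences, over a common denominator.
  have i0 : ((y - x) * (z - x) * (0 - x))⁻¹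
      = -(y * z * (z - y)) / (x * y * z * (y - x) * (z - x) * (z - y)) := by
    rw [zero_sub]; field_simp
  have i1 : ((x - y) * (z - y) * (0 - y))⁻¹
      = x * z * (z - x) / (x * y * z * (y - x) * (z - x) * (z - y)) := by
    rw [zero_sub, ← neg_sub y x]; field_simp
  have i2 : ((x - z) * (y - z) * (0 - z))⁻¹
      = -(x * y * (y - x)) / (x * y * z * (y - x) * (z - x) * (z - y)) := by
    rw [zero_sub, ← neg_sub z x, ← neg_sub z y]; field_simp
  have i3 : ((x - 0) * (y - 0) * (z - 0))⁻¹
      = (y - x) * (z - x) * (z - y) / (x * y * z * (y - x) * (z - x) * (z - y)) := by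
    simp only [sub_zero]; field_simp
  have hV : x * y * z * (y - x) * (z - x) * (z - y) ≠ 0 := by positivity
  have r0 : pushThree (y - x + (z - x) + (0 - x))
      ((y - x) * (z - x) + (y - x) * (0 - x) + (z - x) * (0 - x))
      ((y - x) * (z - x) * (0 - x)) 0 (c - (a 0 + a 1 + a 2) / 2 + 2 * x)
      (a 0 ^ 2) (a 1 ^ 2) (a 2 ^ 2) = _ := Eq.trans (by congr 1 <;> ring) q0
  have r1 : pushThree (x - y + (z - y) + (0 - y))
      ((x - y) * (z - y) + (x - y) * (0 - y) + (z - y) * (0 - y))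
      ((x - y) * (z - y) * (0 - y)) 0 (c - (a 0 + a 1 + a 2) / 2 + 2 * y)
      (a 0 ^ 2) (a 1 ^ 2) (a 2 ^ 2) = _ := Eq.trans (by congr 1 <;> ring) q1
  have r2 : pushThree (x - z + (y - z) + (0 - z))
      ((x - z) * (y - z) + (x - z) * (0 - z) + (y - z) * (0 - z))
      ((x - z) * (y - z) * (0 - z)) 0 (c - (a 0 + a 1 + a 2) / 2 + 2 * z)
      (a 0 ^ 2) (a 1 ^ 2) (a 2 ^ 2) = _ := Eq.trans (by congr 1 <;> ring) q2
  have r3 : pushThree (x - 0 + (y - 0) + (z - 0))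
      ((x - 0) * (y - 0) + (x - 0) * (z - 0) + (y - 0) * (z - 0))
      ((x - 0) * (y - 0) * (z - 0)) 0 (c - (a 0 + a 1 + a 2) / 2 + 2 * 0)
      (a 0 ^ 2) (a 1 ^ 2) (a 2 ^ 2) = _ := Eq.trans (by congr 1 <;> ring) q3
  rw [r0, r1, r2, r3, i0, i1, i2, i3]
  simp only [← mul_div_assoc, ← add_div]
  rw [div_eq_iff hV]
  ring
end
end

section
/- The origin of ℝ^7 lies in the topological interior of the polytope Q := convexHull{v_1,...,v_12}, and each of the twelve vectors v_1,...,v_12 is an extreme point of Q. (These are conditions (a) and (b) for Q to be a Fano polytope.) -/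
/-!
Both claims have explicit certificates.

The origin is a convex combination of the twelve vectors with strictly positive weights
(`1/14` for `v_1, …, v_6, v_11, v_12` and `3/28` for `v_7, …, v_10`). Since `v_1, v_2, v_3`,
`v_7, v_8, v_9`, `v_11` form the standard basis and `v_11 = -v_12`, these weights can be perturbed
affinely in `x` so as to represent `x` with total weight `1`; they remain nonnegative for small `x`.
This is `mem_Q_of_small`.

Each `v_j` is the unique maximizer over the twelve vectors of an explicit linear functional
(`dual j`), hence an exposed and so an extreme point of their convex hull
(`extreme_of_strict_max`).
-/

noncomputable section

/-- The twelve vertices of the Fano polytope of the Nill–Paffenholz toric Fano 7-fold. -/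
def vs : Fin 12 → Fin 7 → ℝ :=
  ![![1,0,0,0,0,0,0], ![0,1,0,0,0,0,0], ![0,0,1,0,0,0,0],
    ![0,0,-1,0,0,0,-1], ![0,-1,0,0,0,0,-1], ![-1,0,0,0,0,0,-1],
    ![0,0,0,1,0,0,0], ![0,0,0,0,1,0,0], ![0,0,0,0,0,1,0],
    ![0,0,0,-1,-1,-1,2], ![0,0,0,0,0,0,1], ![0,0,0,0,0,0,-1]]

/-- The Fano polytope `Q`, the convex hull of the twelve vertices. -/
def Q : Set (Fin 7 → ℝ) := convexHull ℝ (Set.range vs)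

/-- A member of a family at which a linear functional is strictly larger than at all other members
is an extreme point of the convex hull. -/
lemma extreme_of_strict_max {ι E : Type*} [AddCommGroup E] [Module ℝ E] (v : ι → E) (j : ι)
    (f : E →ₗ[ℝ] ℝ) (h : ∀ i, i ≠ j → f (v i) < f (v j)) :
    v j ∈ Set.extremePoints ℝ (convexHull ℝ (Set.range v)) := by
  -- The open half-space below `v j` together with `v j` itself is convex and contains the family.
  have hconv : Convex ℝ ({x | f x < f (v j)} ∪ {v j}) := by
    intro x hx y hy a b ha hb hab
    by_cases hxy : x = v j ∧ y = v j
    · right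
      rw [hxy.1, hxy.2, ← add_smul, hab, one_smul]
      rfl
    rcases ha.eq_or_lt with rfl | ha
    · obtain rfl : b = 1 := by linarith
      simpa using hy
    rcases hb.eq_or_lt with rfl | hb
    · obtain rfl : a = 1 := by linarith
      simpa using hx
    left
    have hc : f (v j) = a * f (v j) + b * f (v j) := by rw [← add_mul, hab, one_mul]
    simp only [Set.mem_ofPred_eq, map_add, map_smul, smul_eq_mul]
    rcases hx with hx | hx <;> rcases hy with hy | hy <;>
      simp only [Set.mem_ofPred_eq, Set.mem_singleton_iff] at hx hy
    · nlinarith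
    · subst hy; nlinarith
    · subst hx; nlinarith
    · exact absurd ⟨hx, hy⟩ hxy
  have hsub : convexHull ℝ (Set.range v) ⊆ {x | f x < f (v j)} ∪ {v j} := by
    refine convexHull_min ?_ hconv
    rintro _ ⟨i, rfl⟩
    by_cases hi : i = j
    · right; rw [hi]; rfl
    · exact Or.inl (h i hi)
  refine mem_extremePoints_iff_left.2 ⟨subset_convexHull ℝ _ ⟨j, rfl⟩, ?_⟩
  rintro x hx y hy ⟨a, b, ha, hb, hab, hxy⟩
  rcases hsub hx with hx | hx
  · exfalso
    have hy' : f y ≤ f (v j) := by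
      rcases hsub hy with hy | hy
      · exact le_of_lt hy
      · rw [Set.mem_singleton_iff.1 hy]
    have hf := congrArg f hxy
    simp only [Set.mem_ofPred_eq, map_add, map_smul, smul_eq_mul] at hx hf
    have hc : f (v j) = a * f (v j) + b * f (v j) := by rw [← add_mul, hab, one_mul]
    nlinarith
  · exact hx

/-- Coefficients of linear functionals: over the twelve vectors, the pairing with `dual j` is
maximized at `vs j` only. -/
def dual : Fin 12 → Fin 7 → ℝ :=
  ![![1,0,0,0,0,0,0], ![0,1,0,0,0,0,0], ![0,0,1,0,0,0,0],
    ![0,0,-1,0,0,0,0], ![0,-1,0,0,0,0,0], ![-1,0,0,0,0,0,0],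
    ![0,0,0,1,0,0,0], ![0,0,0,0,1,0,0], ![0,0,0,0,0,1,0],
    ![0,0,0,-1,-1,-1,0], ![0,0,0,1,1,1,2], ![1,1,1,0,0,0,-2]]

set_option maxHeartbeats 2000000 in
lemma dual_strict_max (j i : Fin 12) (h : i ≠ j) : dual j ⬝ᵥ vs i < dual j ⬝ᵥ vs j := by
  fin_cases j <;> fin_cases i <;>
    first
    | exact absurd rfl h
    | (simp [dual, vs, dotProduct, Fin.sum_univ_succ]; done)
    | (simp [dual, vs, dotProduct, Fin.sum_univ_succ]; norm_num)

/-- Weights summing to `1` that represent `x` as an affine combination of the twelve vectors. The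
last two weights restore the total weight and adjust the seventh coordinate. -/
def weight (x : Fin 7 → ℝ) : Fin 12 → ℝ :=
  ![1/14 + x 0, 1/14 + x 1, 1/14 + x 2, 1/14, 1/14, 1/14,
    3/28 + x 3, 3/28 + x 4, 3/28 + x 5, 3/28,
    1/14 + (x 6 - (x 0 + x 1 + x 2 + x 3 + x 4 + x 5)) / 2,
    1/14 + (-x 6 - (x 0 + x 1 + x 2 + x 3 + x 4 + x 5)) / 2]

lemma weight_sum (x : Fin 7 → ℝ) : ∑ i, weight x i = 1 := by
  simp [weight, Fin.sum_univ_succ]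
  ring

lemma weight_combination (x : Fin 7 → ℝ) : ∑ i, weight x i • vs i = x := by
  funext k
  fin_cases k <;> simp [weight, vs, Fin.sum_univ_succ] <;> ring

lemma mem_Q_of_small (x : Fin 7 → ℝ) (hx : ∀ k, |x k| < 1 / 100) : x ∈ Q := by
  rw [← weight_combination x]
  refine (convex_convexHull ℝ (Set.range vs)).sum_mem ?_ (weight_sum x)
    fun i _ => subset_convexHull ℝ _ ⟨i, rfl⟩
  have h := fun k => abs_lt.1 (hx k)
  obtain ⟨a0, b0⟩ := h 0
  obtain ⟨a1, b1⟩ := h 1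
  obtain ⟨a2, b2⟩ := h 2
  obtain ⟨a3, b3⟩ := h 3
  obtain ⟨a4, b4⟩ := h 4
  obtain ⟨a5, b5⟩ := h 5
  obtain ⟨a6, b6⟩ := h 6
  intro i _
  fin_cases i <;> simp [weight] <;> linarith

/-- Conditions (a) and (b) for `Q` to be a Fano polytope: the origin is an interior
point of `Q`, and each of the twelve given vectors is an extreme point of `Q`. -/
theorem origin_interior_and_vertices_extreme :
    (0 : Fin 7 → ℝ) ∈ interior Q ∧ ∀ j : Fin 12, vs j ∈ Set.extremePoints ℝ Q := by
  refine ⟨?_, fun j => ?_⟩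
  · rw [mem_interior_iff_mem_nhds]
    refine Filter.mem_of_superset (Metric.ball_mem_nhds 0 (by norm_num : (0 : ℝ) < 1 / 100)) ?_
    intro x hx
    rw [mem_ball_zero_iff] at hx
    exact mem_Q_of_small x fun k => (norm_le_pi_norm x k).trans_lt hx
  · exact extreme_of_strict_max vs j (dotProductBilin ℝ ℝ (dual j)) fun i hi => dual_strict_max j i hi
end
end

section
/- Every facet (6-dimensional face) of the polytope Q := convexHull{v_1,...,v_12} ⊂ ℝ^7 is a simplex; that is, each facet of Q contains exactly 7 of the points v_1,...,v_12 and these 7 points are affinely independent. (This is condition (c) for Q to be a Fano polytope.) -/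
/-!
Call a point of `F` a vertex of `F` if it is one of the twelve points `vs j`.  As `F` is extreme,
a convex combination of the `vs j` lying in `F` only uses vertices of `F`
(`vertex_mem_of_combination_mem`); hence `F` is the convex hull of its vertices, and having
dimension `6` it has at least seven of them.

For the upper bound, the origin is a convex combination of all twelve points with positive weights,
so a face containing it contains every `vs j` and has dimension `7`; thus `0 ∉ F`.
(Below, indices run from `0` to `11`, as in `vs`.)  The relations
`v₀ + v₅ = v₁ + v₄ = v₂ + v₃ = v₁₁`, `v₆ + v₇ + v₈ + v₉ = 2 v₁₀` and `v₁₀ + v₁₁ = 0` show that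
the vertices of `F` contain none of the sets `{0,5}`, `{1,4}`, `{2,3}`, `{6,7,8,9}`, `{10,11}`:
the barycentre of any of these lies on the segment from `v₁₀` to `v₁₁`, in its relative interior,
so `F` would contain `v₁₀`, `v₁₁` and their midpoint `0`.  These five sets partition the indices, so
`F` has at most `1 + 1 + 1 + 3 + 1 = 7` vertices.  Seven points spanning a six-dimensional affine
space are affinely independent.
-/

open scoped Classical

noncomputable section

/-- An extreme set containing a convex combination of the `vs j` contains every `vs i` that occurs
in it with positive weight. -/
lemma vertex_mem_of_combination_mem {F : Set (Fin 7 → ℝ)} (hF : IsExtreme ℝ Q F)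
    (w : Fin 12 → ℝ) (h0 : ∀ j, 0 ≤ w j) (h1 : ∑ j, w j = 1) (hmem : ∑ j, w j • vs j ∈ F)
    {i : Fin 12} (hi : 0 < w i) : vs i ∈ F := by
  have hvs : ∀ j, vs j ∈ Q := fun j => subset_convexHull ℝ _ ⟨j, rfl⟩
  have hle : w i ≤ 1 := h1 ▸ Finset.single_le_sum (fun j _ => h0 j) (Finset.mem_univ i)
  -- Splitting off only half of the weight of `vs i` keeps `1 - t` positive even if `w i = 1`.
  set t : ℝ := w i / 2 with ht
  have htpos : 0 < t := by positivity
  have ht1 : 0 < 1 - t := by linarith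
  let u : Fin 12 → ℝ := fun j => (1 - t)⁻¹ * (w j - if j = i then t else 0)
  have hu0 : ∀ j, 0 ≤ u j := by
    intro j
    refine mul_nonneg (inv_nonneg.2 ht1.le) ?_
    split_ifs with h
    · subst h; linarith
    · simpa using h0 j
  have hu1 : ∑ j, u j = 1 := by
    simp only [u, ← Finset.mul_sum, Finset.sum_sub_distrib, h1, Finset.sum_ite_eq',
      Finset.mem_univ, if_true]
    exact inv_mul_cancel₀ ht1.ne'
  have hz : ∑ j, u j • vs j ∈ Q :=
    (convex_convexHull ℝ _).sum_mem (fun j _ => hu0 j) hu1 (fun j _ => hvs j)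
  refine hF.left_mem_of_mem_openSegment (hvs i) hz hmem ⟨t, 1 - t, htpos, ht1, by ring, ?_⟩
  have : ∀ j, (1 - t) • u j • vs j = w j • vs j - (if j = i then t else 0) • vs j := by
    intro j
    rw [smul_smul, ← sub_smul]
    congr 1
    exact mul_inv_cancel_left₀ ht1.ne' _
  rw [Finset.smul_sum, Finset.sum_congr rfl (fun j _ => this j), Finset.sum_sub_distrib]
  simp [ite_smul]

lemma subset_convexHull_vertices {F : Set (Fin 7 → ℝ)} (hF : IsExtreme ℝ Q F) :
    F ⊆ convexHull ℝ (Set.range fun j : {j : Fin 12 // vs j ∈ F} => vs j.1) := by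
  intro x hx
  have hxQ : x ∈ Q := hF.1 hx
  rw [Q, convexHull_range_eq_exists_affineCombination] at hxQ
  obtain ⟨s, w, hw0, hw1, rfl⟩ := hxQ
  rw [Finset.affineCombination_eq_linear_combination _ _ _ hw1] at hx ⊢
  let w' : Fin 12 → ℝ := fun j => if j ∈ s then w j else 0
  have hw'0 : ∀ j, 0 ≤ w' j := by
    intro j
    by_cases h : j ∈ s
    · simpa [w', h] using hw0 j h
    · simp [w', h]
  have hw'1 : ∑ j, w' j = 1 := by simpa [w'] using hw1
  have hx' : ∑ j, w' j • vs j ∈ F := by simpa [w', ite_smul] using hx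
  have hpos : ∀ j ∈ s, w j ≠ 0 → vs j ∈ F := by
    intro j hj hne
    refine vertex_mem_of_combination_mem hF w' hw'0 hw'1 hx' ?_
    simpa [w', hj] using lt_of_le_of_ne (hw0 j hj) hne.symm
  rw [← Finset.sum_filter_of_ne (p := fun j => w j ≠ 0)
    (fun j _ h h0 => h (by rw [h0, zero_smul]))]
  refine (convex_convexHull ℝ _).sum_mem (fun j hj => hw0 j (Finset.mem_filter.1 hj).1) ?_ ?_
  · rwa [Finset.sum_filter_ne_zero]
  · intro j hj
    obtain ⟨hj, hne⟩ := Finset.mem_filter.1 hj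
    exact subset_convexHull ℝ _ ⟨⟨j, hpos j hj hne⟩, rfl⟩

/-- The origin is interior to `Q`, so it lies on no facet. -/
lemma zero_notMem_facet {F : Set (Fin 7 → ℝ)} (hF : IsExtreme ℝ Q F)
    (hdim : Module.finrank ℝ (vectorSpan ℝ F) = 6) : (0 : Fin 7 → ℝ) ∉ F := by
  intro h0
  -- The weights come from `v₀ + ⋯ + v₅ + 3 v₁₀ = 0` and `v₆ + ⋯ + v₉ + 2 v₁₁ = 0`.
  let w : Fin 12 → ℝ := fun j => ![1, 1, 1, 1, 1, 1, 1, 1, 1, 1, 3, 2] j / 15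
  have hw : ∀ j, 0 < w j := by
    intro j
    fin_cases j <;> norm_num [w]
  have hw1 : ∑ j, w j = 1 := by
    norm_num [w, Fin.sum_univ_succ]
  have hsum : ∑ j, w j • vs j = 0 := by
    ext k
    fin_cases k <;> norm_num [w, vs, Fin.sum_univ_succ]
  have hall : ∀ j, vs j ∈ F := fun j =>
    vertex_mem_of_combination_mem hF w (fun j => (hw j).le) hw1 (hsum ▸ h0) (hw j)
  have hspan : ∀ j, vs j ∈ vectorSpan ℝ F := fun j => by
    simpa using vsub_mem_vectorSpan ℝ (hall j) h0
  have htop : vectorSpan ℝ F = ⊤ := by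
    rw [eq_top_iff]
    intro x _
    have hx : x = x 0 • vs 0 + x 1 • vs 1 + x 2 • vs 2 + x 3 • vs 6 + x 4 • vs 7 + x 5 • vs 8
        + x 6 • vs 10 := by
      ext k
      fin_cases k <;> simp [vs]
    rw [hx]
    have h := fun (c : ℝ) j => Submodule.smul_mem _ c (hspan j)
    exact add_mem (add_mem (add_mem (add_mem (add_mem (add_mem (h _ _) (h _ _)) (h _ _)) (h _ _))
      (h _ _)) (h _ _)) (h _ _)
  rw [htop, finrank_top] at hdim
  simp at hdim

lemma not_mem_both_poles {F : Set (Fin 7 → ℝ)} (hF : IsExtreme ℝ Q F) (hconv : Convex ℝ F)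
    (hdim : Module.finrank ℝ (vectorSpan ℝ F) = 6) : ¬ (vs 10 ∈ F ∧ vs 11 ∈ F) := by
  rintro ⟨ha, hb⟩
  refine zero_notMem_facet hF hdim ?_
  have h := hconv ha hb (a := 1 / 2) (b := 1 / 2) (by norm_num) (by norm_num) (by norm_num)
  convert h using 1
  ext k
  fin_cases k <;> simp [vs]

/-- A facet contains no point of the open segment from `vs 10` to `vs 11`. -/
lemma axis_notMem_facet {F : Set (Fin 7 → ℝ)} (hF : IsExtreme ℝ Q F) (hconv : Convex ℝ F)
    (hdim : Module.finrank ℝ (vectorSpan ℝ F) = 6) {x : Fin 7 → ℝ}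
    (hx : x ∈ openSegment ℝ (vs 10) (vs 11)) : x ∉ F := by
  intro hxF
  have hvs : ∀ j, vs j ∈ Q := fun j => subset_convexHull ℝ _ ⟨j, rfl⟩
  exact not_mem_both_poles hF hconv hdim
    ⟨hF.left_mem_of_mem_openSegment (hvs 10) (hvs 11) hxF hx,
      hF.right_mem_of_mem_openSegment (hvs 10) (hvs 11) hxF hx⟩

lemma not_mem_both_of_add_eq {F : Set (Fin 7 → ℝ)} (hF : IsExtreme ℝ Q F) (hconv : Convex ℝ F)
    (hdim : Module.finrank ℝ (vectorSpan ℝ F) = 6) {i j : Fin 12}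
    (hij : vs i + vs j = vs 11) : ¬ (vs i ∈ F ∧ vs j ∈ F) := by
  rintro ⟨ha, hb⟩
  have h := hconv ha hb (a := 1 / 2) (b := 1 / 2) (by norm_num) (by norm_num) (by norm_num)
  refine axis_notMem_facet hF hconv hdim ?_ h
  rw [← smul_add, hij]
  refine ⟨1 / 4, 3 / 4, by norm_num, by norm_num, by norm_num, ?_⟩
  ext k
  fin_cases k <;> simp [vs] <;> norm_num

lemma not_mem_all_four {F : Set (Fin 7 → ℝ)} (hF : IsExtreme ℝ Q F) (hconv : Convex ℝ F)
    (hdim : Module.finrank ℝ (vectorSpan ℝ F) = 6) :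
    ¬ (vs 6 ∈ F ∧ vs 7 ∈ F ∧ vs 8 ∈ F ∧ vs 9 ∈ F) := by
  rintro ⟨h6, h7, h8, h9⟩
  have hhalf : (0 : ℝ) ≤ 1 / 2 := by norm_num
  have h := hconv (hconv h6 h7 hhalf hhalf (by norm_num)) (hconv h8 h9 hhalf hhalf (by norm_num))
    hhalf hhalf (by norm_num)
  refine axis_notMem_facet hF hconv hdim ?_ h
  refine ⟨3 / 4, 1 / 4, by norm_num, by norm_num, by norm_num, ?_⟩
  ext k
  fin_cases k <;> simp [vs] <;> norm_num

lemma card_vertices_le {F : Set (Fin 7 → ℝ)} (hF : IsExtreme ℝ Q F) (hconv : Convex ℝ F)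
    (hdim : Module.finrank ℝ (vectorSpan ℝ F) = 6) :
    (Finset.univ.filter (fun j : Fin 12 => vs j ∈ F)).card ≤ 7 := by
  have hpair : ∀ {p q : Prop}, ¬ (p ∧ q) → (if p then 1 else 0) + (if q then 1 else 0) ≤ 1 := by
    intro p q h
    split_ifs <;> simp_all
  have hfour : ∀ {p q r s : Prop}, ¬ (p ∧ q ∧ r ∧ s) → (if p then 1 else 0) +
      (if q then 1 else 0) + (if r then 1 else 0) + (if s then 1 else 0) ≤ 3 := by
    intro p q r s h
    split_ifs <;> simp_all
  have e05 : vs 0 + vs 5 = vs 11 := by ext k; fin_cases k <;> simp [vs]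
  have e14 : vs 1 + vs 4 = vs 11 := by ext k; fin_cases k <;> simp [vs]
  have e23 : vs 2 + vs 3 = vs 11 := by ext k; fin_cases k <;> simp [vs]
  have h05 := hpair (not_mem_both_of_add_eq hF hconv hdim e05)
  have h14 := hpair (not_mem_both_of_add_eq hF hconv hdim e14)
  have h23 := hpair (not_mem_both_of_add_eq hF hconv hdim e23)
  have h1011 := hpair (not_mem_both_poles hF hconv hdim)
  have h6789 := hfour (not_mem_all_four hF hconv hdim)
  have hsum : ∀ f : Fin 12 → ℕ, ∑ j, f j = (f 0 + f 5) + (f 1 + f 4) + (f 2 + f 3) +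
      (f 6 + f 7 + f 8 + f 9) + (f 10 + f 11) := by
    intro f
    simp only [Fin.sum_univ_succ, Fin.sum_univ_zero]
    simp only [Fin.reduceSucc]
    ring
  rw [Finset.card_filter, hsum]
  linarith

/-- Condition (c) for `Q` to be a Fano polytope: every facet of `Q` is a simplex.
A face of the polytope `Q` is a closed convex extreme subset, and a facet is a face of
affine dimension `6`.  The claim: every facet contains exactly `7` of the twelve points
`vs 0, …, vs 11`, and those `7` points are affinely independent. -/
theorem facets_are_simplices (F : Set (Fin 7 → ℝ))
    (hextreme : IsExtreme ℝ Q F) (hconv : Convex ℝ F) (hclosed : IsClosed F)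
    (hdim : Module.finrank ℝ (vectorSpan ℝ F) = 6) :
    (Finset.univ.filter (fun j : Fin 12 => vs j ∈ F)).card = 7 ∧
      AffineIndependent ℝ (fun j : {j : Fin 12 // vs j ∈ F} => vs j.1) := by
  set p : {j : Fin 12 // vs j ∈ F} → Fin 7 → ℝ := fun j => vs j.1
  have hcard : Fintype.card {j : Fin 12 // vs j ∈ F} =
      (Finset.univ.filter (fun j : Fin 12 => vs j ∈ F)).card := Fintype.card_subtype _
  have hle := card_vertices_le hextreme hconv hdim
  have hspan : vectorSpan ℝ F ≤ vectorSpan ℝ (Set.range p) := by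
    rw [← direction_affineSpan ℝ (Set.range p), ← affineSpan_convexHull, direction_affineSpan]
    exact vectorSpan_mono ℝ (subset_convexHull_vertices hextreme)
  have hsix : 6 ≤ Module.finrank ℝ (vectorSpan ℝ (Set.range p)) :=
    hdim ▸ Submodule.finrank_mono hspan
  have hpos : Fintype.card {j : Fin 12 // vs j ∈ F} ≠ 0 := by
    intro h
    have := Fintype.card_eq_zero_iff.1 h
    rw [Set.range_eq_empty, vectorSpan_empty, finrank_bot] at hsix
    omega
  obtain ⟨n, hn⟩ := Nat.exists_eq_succ_of_ne_zero hpos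
  have hn6 := hsix.trans (finrank_vectorSpan_range_le ℝ p hn)
  have hseven : Fintype.card {j : Fin 12 // vs j ∈ F} = 6 + 1 := by omega
  exact ⟨by omega, (affineIndependent_iff_le_finrank_vectorSpan ℝ p hseven).2 hsix⟩
end
end

section
/- Every extreme point of the polytope P := {w ∈ ℝ^7 : ⟨v_j, w⟩ ≥ −1 for all j = 1,...,12} lies in ℤ^7. (That is, the Fano polytope Q = convexHull{v_1,...,v_12} is reflexive.) -/
/-!
Write `t = w 6`. The inequalities defining `P` say that `-1 ≤ t ≤ 1`, that `w 0, w 1, w 2` lie in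
the interval `[-1, 1 - t]`, and that `(w 3, w 4, w 5)` lies in the simplex
`{y | y ≥ -1, ∑ y ≤ 1 + 2 t}`. So `P` fibres over the segment `[-1, 1]`, with fibre the product of
a cube and a simplex, neither of which degenerates for `t ∈ [-1, 1]`.

At an extreme point `w` no nonzero `d` satisfies `w + d ∈ P` and `w - d ∈ P`
(`eq_zero_of_add_sub_mem`). Moving inside the fibre shows that each of `w 0, w 1, w 2` is an
endpoint of its interval (`cube_tight`), and that `(w 3, w 4, w 5)` is a vertex of its simplex
(`simplex_edge_tight`, `simplex_facet_tight`). Such a vertex of the fibre depends affinely on `t`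
with integer coefficients and stays in `P` for all `t ∈ [-1, 1]`; moving along this segment shows
`t = 1` or `t = -1`. Hence all coordinates are integers.
-/

noncomputable section

/-- The polar dual polytope (the Delzant polytope of the anticanonically polarized
Nill–Paffenholz manifold): `P = {w : ⟨vⱼ, w⟩ ≥ -1 for all j}`. -/
def P : Set (Fin 7 → ℝ) := {w | ∀ j : Fin 12, -1 ≤ ∑ i : Fin 7, vs j i * w i}

lemma mem_P_iff (w : Fin 7 → ℝ) : w ∈ P ↔
    (-1 ≤ w 0 ∧ -1 ≤ w 1 ∧ -1 ≤ w 2) ∧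
    (w 0 ≤ 1 - w 6 ∧ w 1 ≤ 1 - w 6 ∧ w 2 ≤ 1 - w 6) ∧
    (-1 ≤ w 3 ∧ -1 ≤ w 4 ∧ -1 ≤ w 5) ∧ w 3 + w 4 + w 5 ≤ 1 + 2 * w 6 ∧
    -1 ≤ w 6 ∧ w 6 ≤ 1 := by
  simp only [P, Set.mem_ofPred_eq, Fin.forall_fin_succ, Fin.sum_univ_succ, vs]
  simp [Fin.succ]
  constructor
  · rintro ⟨h0, h1, h2, h3, h4, h5, h6, h7, h8, h9, h10, h11⟩
    refine ⟨⟨?_, ?_, ?_⟩, ⟨?_, ?_, ?_⟩, ⟨?_, ?_, ?_⟩, ?_, ?_, ?_⟩ <;> linarith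
  · rintro ⟨⟨h0, h1, h2⟩, ⟨h3, h4, h5⟩, ⟨h6, h7, h8⟩, h9, h10, h11⟩
    refine ⟨?_, ?_, ?_, ?_, ?_, ?_, ?_, ?_, ?_, ?_, ?_, ?_⟩ <;> linarith

lemma eq_zero_of_add_sub_mem {w : Fin 7 → ℝ} (hw : w ∈ Set.extremePoints ℝ P) (d : Fin 7 → ℝ)
    (h₁ : w + d ∈ P) (h₂ : w - d ∈ P) : d = 0 := by
  have h := hw.2 h₁ h₂ ⟨1 / 2, 1 / 2, by norm_num, by norm_num, by norm_num, by
    ext i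
    simp
    ring⟩
  simpa using h

lemma cube_tight {w : Fin 7 → ℝ} (hw : w ∈ Set.extremePoints ℝ P) (i : Fin 7)
    (hi : i = 0 ∨ i = 1 ∨ i = 2) : w i = -1 ∨ w i = 1 - w 6 := by
  by_contra! hne
  obtain ⟨⟨h0, h1, h2⟩, ⟨h3, h4, h5⟩, ⟨h6, h7, h8⟩, h9, h10, h11⟩ := (mem_P_iff w).1 hw.1
  have hlo : -1 < w i := lt_of_le_of_ne (by rcases hi with rfl | rfl | rfl <;> assumption)
    hne.1.symm
  have hhi : w i < 1 - w 6 := lt_of_le_of_ne (by rcases hi with rfl | rfl | rfl <;> assumption)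
    hne.2
  obtain ⟨ε, hε, hεlo, hεhi⟩ : ∃ ε > 0, ε ≤ w i + 1 ∧ ε ≤ 1 - w 6 - w i :=
    ⟨min (w i + 1) (1 - w 6 - w i), lt_min (by linarith) (by linarith),
      min_le_left _ _, min_le_right _ _⟩
  have hd := congrFun (eq_zero_of_add_sub_mem hw (Pi.single i ε)
    (by
      rw [mem_P_iff]
      rcases hi with rfl | rfl | rfl <;> simp <;>
        refine ⟨⟨?_, ?_, ?_⟩, ⟨?_, ?_, ?_⟩, ⟨?_, ?_, ?_⟩, ?_, ?_, ?_⟩ <;> linarith)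
    (by
      rw [mem_P_iff]
      rcases hi with rfl | rfl | rfl <;> simp <;>
        refine ⟨⟨?_, ?_, ?_⟩, ⟨?_, ?_, ?_⟩, ⟨?_, ?_, ?_⟩, ?_, ?_, ?_⟩ <;> linarith)) i
  simp at hd
  exact hε.ne' hd

/-- At most one of `w 3, w 4, w 5` exceeds `-1`: otherwise `w` can be moved both ways parallel to
an edge of the facet `w 3 + w 4 + w 5 = 1 + 2 * w 6`. -/
lemma simplex_edge_tight {w : Fin 7 → ℝ} (hw : w ∈ Set.extremePoints ℝ P) (i j : Fin 7)
    (hij : i = 3 ∧ j = 4 ∨ i = 3 ∧ j = 5 ∨ i = 4 ∧ j = 5) : w i = -1 ∨ w j = -1 := by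
  by_contra! hne
  obtain ⟨⟨h0, h1, h2⟩, ⟨h3, h4, h5⟩, ⟨h6, h7, h8⟩, h9, h10, h11⟩ := (mem_P_iff w).1 hw.1
  have hi : -1 < w i := lt_of_le_of_ne
    (by rcases hij with ⟨rfl, rfl⟩ | ⟨rfl, rfl⟩ | ⟨rfl, rfl⟩ <;> assumption) hne.1.symm
  have hj : -1 < w j := lt_of_le_of_ne
    (by rcases hij with ⟨rfl, rfl⟩ | ⟨rfl, rfl⟩ | ⟨rfl, rfl⟩ <;> assumption) hne.2.symm
  obtain ⟨ε, hε, hεi, hεj⟩ : ∃ ε > 0, ε ≤ w i + 1 ∧ ε ≤ w j + 1 :=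
    ⟨min (w i + 1) (w j + 1), lt_min (by linarith) (by linarith),
      min_le_left _ _, min_le_right _ _⟩
  have hd := congrFun (eq_zero_of_add_sub_mem hw (Pi.single i ε - Pi.single j ε)
    (by
      rw [mem_P_iff]
      rcases hij with ⟨rfl, rfl⟩ | ⟨rfl, rfl⟩ | ⟨rfl, rfl⟩ <;> simp <;>
        refine ⟨⟨?_, ?_, ?_⟩, ⟨?_, ?_, ?_⟩, ⟨?_, ?_, ?_⟩, ?_, ?_, ?_⟩ <;> linarith)
    (by
      rw [mem_P_iff]
      rcases hij with ⟨rfl, rfl⟩ | ⟨rfl, rfl⟩ | ⟨rfl, rfl⟩ <;> simp <;>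
        refine ⟨⟨?_, ?_, ?_⟩, ⟨?_, ?_, ?_⟩, ⟨?_, ?_, ?_⟩, ?_, ?_, ?_⟩ <;> linarith)) i
  rcases hij with ⟨rfl, rfl⟩ | ⟨rfl, rfl⟩ | ⟨rfl, rfl⟩ <;> simp at hd <;> exact hε.ne' hd

lemma simplex_facet_tight {w : Fin 7 → ℝ} (hw : w ∈ Set.extremePoints ℝ P) (i : Fin 7)
    (hi : i = 3 ∨ i = 4 ∨ i = 5) : w i = -1 ∨ w 3 + w 4 + w 5 = 1 + 2 * w 6 := by
  by_contra! hne
  obtain ⟨⟨h0, h1, h2⟩, ⟨h3, h4, h5⟩, ⟨h6, h7, h8⟩, h9, h10, h11⟩ := (mem_P_iff w).1 hw.1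
  have hlo : -1 < w i := lt_of_le_of_ne (by rcases hi with rfl | rfl | rfl <;> assumption)
    hne.1.symm
  have hhi : w 3 + w 4 + w 5 < 1 + 2 * w 6 := lt_of_le_of_ne h9 hne.2
  obtain ⟨ε, hε, hεlo, hεhi⟩ : ∃ ε > 0, ε ≤ w i + 1 ∧ ε ≤ 1 + 2 * w 6 - (w 3 + w 4 + w 5) :=
    ⟨min (w i + 1) (1 + 2 * w 6 - (w 3 + w 4 + w 5)), lt_min (by linarith) (by linarith),
      min_le_left _ _, min_le_right _ _⟩
  have hd := congrFun (eq_zero_of_add_sub_mem hw (Pi.single i ε)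
    (by
      rw [mem_P_iff]
      rcases hi with rfl | rfl | rfl <;> simp <;>
        refine ⟨⟨?_, ?_, ?_⟩, ⟨?_, ?_, ?_⟩, ⟨?_, ?_, ?_⟩, ?_, ?_, ?_⟩ <;> linarith)
    (by
      rw [mem_P_iff]
      rcases hi with rfl | rfl | rfl <;> simp <;>
        refine ⟨⟨?_, ?_, ?_⟩, ⟨?_, ?_, ?_⟩, ⟨?_, ?_, ?_⟩, ?_, ?_, ?_⟩ <;> linarith)) i
  simp at hd
  exact hε.ne' hd

/-- `(w 3, w 4, w 5)` is a vertex of the simplex, which has apex `(-1, -1, -1)` and edge length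
`4 + 2 * w 6`; at most one of the coefficients `a, b, c` is `1`, the others are `0`. -/
lemma simplex_vertex {w : Fin 7 → ℝ} (hw : w ∈ Set.extremePoints ℝ P) :
    ∃ a b c : ℤ, (w 3 = -1 + a * (4 + 2 * w 6) ∧ w 4 = -1 + b * (4 + 2 * w 6) ∧
      w 5 = -1 + c * (4 + 2 * w 6)) ∧ 0 ≤ a ∧ 0 ≤ b ∧ 0 ≤ c ∧ a + b + c ≤ 1 := by
  have h34 := simplex_edge_tight hw 3 4 (by simp)
  have h35 := simplex_edge_tight hw 3 5 (by simp)
  have h45 := simplex_edge_tight hw 4 5 (by simp)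
  have h3 := simplex_facet_tight hw 3 (by simp)
  have h4 := simplex_facet_tight hw 4 (by simp)
  have h5 := simplex_facet_tight hw 5 (by simp)
  by_cases e3 : w 3 = -1
  · by_cases e4 : w 4 = -1
    · rcases h5 with e5 | e5
      · exact ⟨0, 0, 0, by simp [e3, e4, e5], by norm_num⟩
      · refine ⟨0, 0, 1, ⟨by simp [e3], by simp [e4], ?_⟩, by norm_num⟩
        push_cast
        linarith
    · have e5 := h45.resolve_left e4
      refine ⟨0, 1, 0, ⟨by simp [e3], ?_, by simp [e5]⟩, by norm_num⟩
      push_cast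
      linarith [h4.resolve_left e4]
  · have e4 := h34.resolve_left e3
    have e5 := h35.resolve_left e3
    refine ⟨1, 0, 0, ⟨?_, by simp [e4], by simp [e5]⟩, by norm_num⟩
    push_cast
    linarith [h3.resolve_left e3]

/-- Each of the first three fibre coordinates is an endpoint of `[-1, 1 - w 6]`, written with a
coefficient in `{0, 1}`. -/
lemma cube_vertex {w : Fin 7 → ℝ} (hw : w ∈ Set.extremePoints ℝ P) (i : Fin 7)
    (hi : i = 0 ∨ i = 1 ∨ i = 2) :
    ∃ k : ℤ, w i = -1 + k * (2 - w 6) ∧ 0 ≤ k ∧ k ≤ 1 := by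
  rcases cube_tight hw i hi with h | h
  · exact ⟨0, by simp [h], by norm_num⟩
  · refine ⟨1, ?_, by norm_num⟩
    push_cast
    linarith

/-- For coefficients independent of `s`, the corresponding point of the fibre above `s ∈ [-1, 1]` lies in `P`;
`p, q, r` are the cube coefficients and `a, b, c` the simplex coefficients. -/
lemma fibre_point_mem {p q r a b c s : ℝ} (hp : 0 ≤ p ∧ p ≤ 1) (hq : 0 ≤ q ∧ q ≤ 1)
    (hr : 0 ≤ r ∧ r ≤ 1) (ha : 0 ≤ a) (hb : 0 ≤ b) (hc : 0 ≤ c) (habc : a + b + c ≤ 1)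
    (hs : -1 ≤ s ∧ s ≤ 1) :
    (![-1 + p * (2 - s), -1 + q * (2 - s), -1 + r * (2 - s), -1 + a * (4 + 2 * s),
      -1 + b * (4 + 2 * s), -1 + c * (4 + 2 * s), s] : Fin 7 → ℝ) ∈ P := by
  have h2 : 0 ≤ 2 - s := by linarith
  have h4 : 0 ≤ 4 + 2 * s := by linarith
  have lo (k : ℝ) (hk : 0 ≤ k) : -1 ≤ -1 + k * (2 - s) := by linarith [mul_nonneg hk h2]
  have hi (k : ℝ) (hk : k ≤ 1) : -1 + k * (2 - s) ≤ 1 - s := by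
    linarith [mul_le_mul_of_nonneg_right hk h2]
  have lo' (k : ℝ) (hk : 0 ≤ k) : -1 ≤ -1 + k * (4 + 2 * s) := by linarith [mul_nonneg hk h4]
  rw [mem_P_iff]
  refine ⟨⟨lo _ hp.1, lo _ hq.1, lo _ hr.1⟩, ⟨hi _ hp.2, hi _ hq.2, hi _ hr.2⟩,
    ⟨lo' _ ha, lo' _ hb, lo' _ hc⟩, ?_, hs.1, hs.2⟩
  change -1 + a * (4 + 2 * s) + (-1 + b * (4 + 2 * s)) + (-1 + c * (4 + 2 * s)) ≤ 1 + 2 * s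
  linarith [mul_le_mul_of_nonneg_right habc h4]

/-- Every extreme point (vertex) of the polar dual `P` is a lattice point, i.e. the
Fano polytope `Q` is reflexive. -/
theorem P_vertices_integral :
    ∀ w ∈ Set.extremePoints ℝ P, ∀ i : Fin 7, ∃ z : ℤ, w i = (z : ℝ) := by
  intro w hw
  obtain ⟨p, e0, hp⟩ := cube_vertex hw 0 (by simp)
  obtain ⟨q, e1, hq⟩ := cube_vertex hw 1 (by simp)
  obtain ⟨r, e2, hr⟩ := cube_vertex hw 2 (by simp)
  obtain ⟨a, b, c, ⟨e3, e4, e5⟩, ha, hb, hc, habc⟩ := simplex_vertex hw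
  obtain ⟨-, -, -, -, hlo, hhi⟩ := (mem_P_iff w).1 hw.1
  have mem (s : ℝ) (hs : -1 ≤ s ∧ s ≤ 1) := fibre_point_mem (p := p) (q := q) (r := r)
    (a := a) (b := b) (c := c) (s := s) (by exact_mod_cast hp) (by exact_mod_cast hq)
    (by exact_mod_cast hr) (by exact_mod_cast ha) (by exact_mod_cast hb) (by exact_mod_cast hc)
    (by exact_mod_cast habc) hs
  have ht : ∃ t : ℤ, w 6 = t := by
    by_contra! hne
    have h1 : w 6 < 1 := lt_of_le_of_ne hhi (by simpa using hne 1)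
    have h2 : -1 < w 6 := lt_of_le_of_ne hlo (by simpa using (hne (-1)).symm)
    obtain ⟨ε, hε, hεlo, hεhi⟩ : ∃ ε > 0, ε ≤ w 6 + 1 ∧ ε ≤ 1 - w 6 :=
      ⟨min (w 6 + 1) (1 - w 6), lt_min (by linarith) (by linarith),
        min_le_left _ _, min_le_right _ _⟩
    have hd := congrFun (eq_zero_of_add_sub_mem hw
      ![-p * ε, -q * ε, -r * ε, a * (2 * ε), b * (2 * ε), c * (2 * ε), ε]
      (by
        convert mem (w 6 + ε) ⟨by linarith, by linarith⟩ using 1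
        ext i
        fin_cases i <;> simp [e0, e1, e2, e3, e4, e5] <;> ring)
      (by
        convert mem (w 6 - ε) ⟨by linarith, by linarith⟩ using 1
        ext i
        fin_cases i <;> simp [e0, e1, e2, e3, e4, e5] <;> ring)) 6
    exact hε.ne' hd
  obtain ⟨t, ht⟩ := ht
  rw [ht] at e0 e1 e2 e3 e4 e5
  intro i
  fin_cases i
  · exact ⟨-1 + p * (2 - t), by simpa using e0⟩
  · exact ⟨-1 + q * (2 - t), by simpa using e1⟩
  · exact ⟨-1 + r * (2 - t), by simpa using e2⟩
  · exact ⟨-1 + a * (4 + 2 * t), by simpa using e3⟩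
  · exact ⟨-1 + b * (4 + 2 * t), by simpa using e4⟩
  · exact ⟨-1 + c * (4 + 2 * t), by simpa using e5⟩
  · exact ⟨t, ht⟩
end
end
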